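/- Let ε > 0 and let η, u : ℝ × ℝ → ℝ (time × space) be C^∞ functions satisfying ∂_t η + ∂_x u + ε ∂_x(ηu) = 0 for all (t,x). Define η̃ = η − ε ∂_x²η. Then for all (t,x): ∂_t η̃ + ∂_x u − ε ∂_x³u + ε ∂_x(η̃ u) = ε²·( 2(∂_x²η)(∂_x u) + 3(∂_xη)(∂_x²u) + η·∂_x³u ). -/

import Mathlib

/-- Partial derivative in the first (time) variable of `f : ℝ → ℝ → ℝ`. -/
noncomputable def dt1 (f : ℝ → ℝ → ℝ) : ℝ → ℝ → ℝ := fun t x => deriv (fun s => f s x) t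

/-- Partial derivative in the second (space) variable of `f : ℝ → ℝ → ℝ`. -/
noncomputable def dx1 (f : ℝ → ℝ → ℝ) : ℝ → ℝ → ℝ := fun t x => deriv (fun y => f t y) x

/-- Joint smoothness. -/
def SmU (f : ℝ → ℝ → ℝ) : Prop := ContDiff ℝ (⊤ : ℕ∞) fun p : ℝ × ℝ => f p.1 p.2

theorem SmU.diff {f : ℝ → ℝ → ℝ} (h : SmU f) : Differentiable ℝ fun p : ℝ × ℝ => f p.1 p.2 :=
  ContDiff.differentiable h (by simp)

theorem SmU.dx_eq {f : ℝ → ℝ → ℝ} (h : SmU f) (t x : ℝ) :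
    dx1 f t x = fderiv ℝ (fun p : ℝ × ℝ => f p.1 p.2) (t, x) (0, 1) := by
  have h1 : HasDerivAt (fun y : ℝ => ((t, y) : ℝ × ℝ)) (0, 1) x :=
    (hasDerivAt_const x t).prodMk (hasDerivAt_id x)
  exact ((h.diff (t, x)).hasFDerivAt.comp_hasDerivAt x h1).deriv

theorem SmU.dt_eq {f : ℝ → ℝ → ℝ} (h : SmU f) (t x : ℝ) :
    dt1 f t x = fderiv ℝ (fun p : ℝ × ℝ => f p.1 p.2) (t, x) (1, 0) := by
  have h1 : HasDerivAt (fun y : ℝ => ((y, x) : ℝ × ℝ)) (1, 0) t :=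
    (hasDerivAt_id t).prodMk (hasDerivAt_const t x)
  exact ((h.diff (t, x)).hasFDerivAt.comp_hasDerivAt t h1).deriv

theorem SmU.fd {f : ℝ → ℝ → ℝ} (h : SmU f) :
    ContDiff ℝ (⊤ : ℕ∞) (fderiv ℝ (fun p : ℝ × ℝ => f p.1 p.2)) :=
  ContDiff.fderiv_right (m := ((⊤ : ℕ∞) : WithTop ℕ∞)) h (by simp)

theorem SmU.dx {f : ℝ → ℝ → ℝ} (h : SmU f) : SmU (dx1 f) := by
  have : (fun p : ℝ × ℝ => dx1 f p.1 p.2)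
      = fun p => fderiv ℝ (fun p : ℝ × ℝ => f p.1 p.2) p (0, 1) := by
    funext p; exact h.dx_eq p.1 p.2
  unfold SmU
  rw [this]
  exact h.fd.clm_apply contDiff_const

theorem SmU.dt {f : ℝ → ℝ → ℝ} (h : SmU f) : SmU (dt1 f) := by
  have : (fun p : ℝ × ℝ => dt1 f p.1 p.2)
      = fun p => fderiv ℝ (fun p : ℝ × ℝ => f p.1 p.2) p (1, 0) := by
    funext p; exact h.dt_eq p.1 p.2
  unfold SmU
  rw [this]
  exact h.fd.clm_apply contDiff_const

theorem SmU.comm {f : ℝ → ℝ → ℝ} (h : SmU f) : dt1 (dx1 f) = dx1 (dt1 f) := by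
  funext t x
  have e1 : (fun p : ℝ × ℝ => dx1 f p.1 p.2)
      = fun p => fderiv ℝ (fun p : ℝ × ℝ => f p.1 p.2) p (0, 1) := by
    funext p; exact h.dx_eq p.1 p.2
  have e2 : (fun p : ℝ × ℝ => dt1 f p.1 p.2)
      = fun p => fderiv ℝ (fun p : ℝ × ℝ => f p.1 p.2) p (1, 0) := by
    funext p; exact h.dt_eq p.1 p.2
  have hd : DifferentiableAt ℝ (fderiv ℝ (fun p : ℝ × ℝ => f p.1 p.2)) (t, x) :=
    (h.fd.differentiable (by simp)) _
  rw [h.dx.dt_eq, h.dt.dx_eq, e1, e2, fderiv_clm_apply hd (differentiableAt_const _),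
    fderiv_clm_apply hd (differentiableAt_const _)]
  have hs : IsSymmSndFDerivAt ℝ (fun p : ℝ × ℝ => f p.1 p.2) (t, x) :=
    (ContDiff.contDiffAt h).isSymmSndFDerivAt (by
      rw [minSmoothness_of_isRCLikeNormedField]; exact WithTop.coe_le_coe.2 le_top)
  simpa using hs.eq (1, 0) (0, 1)

theorem SmU.hx {f : ℝ → ℝ → ℝ} (h : SmU f) (t x : ℝ) :
    HasDerivAt (fun y => f t y) (dx1 f t x) x := by
  have : DifferentiableAt ℝ (fun y => f t y) x :=
    (h.diff.comp (by fun_prop : Differentiable ℝ fun y : ℝ => ((t, y) : ℝ × ℝ))) x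
  exact this.hasDerivAt

theorem SmU.ht {f : ℝ → ℝ → ℝ} (h : SmU f) (t x : ℝ) :
    HasDerivAt (fun s => f s x) (dt1 f t x) t := by
  have : DifferentiableAt ℝ (fun s => f s x) t :=
    (h.diff.comp (by fun_prop : Differentiable ℝ fun y : ℝ => ((y, x) : ℝ × ℝ))) t
  exact this.hasDerivAt

/-- Equation (3.36) of the paper: if `η_t + u_x + ε(ηu)_x = 0` and `η̃ = η - ε η_{xx}`,
then `η̃_t + u_x - ε u_{xxx} + ε(η̃ u)_x = ε²(2η_{xx}u_x + 3η_x u_{xx} + η u_{xxx})`. -/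
theorem eta_tilde_identity_1d (ε : ℝ) (hε : 0 < ε) (η u : ℝ → ℝ → ℝ)
    (hη : ContDiff ℝ (⊤ : ℕ∞) fun p : ℝ × ℝ => η p.1 p.2)
    (hu : ContDiff ℝ (⊤ : ℕ∞) fun p : ℝ × ℝ => u p.1 p.2)
    (heq : ∀ t x, dt1 η t x + dx1 u t x + ε * dx1 (fun t x => η t x * u t x) t x = 0) :
    ∀ t x,
      dt1 (fun t x => η t x - ε * dx1 (dx1 η) t x) t x
        + dx1 u t x - ε * dx1 (dx1 (dx1 u)) t x
        + ε * dx1 (fun t x => (η t x - ε * dx1 (dx1 η) t x) * u t x) t x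
      = ε ^ 2 * (2 * dx1 (dx1 η) t x * dx1 u t x
          + 3 * dx1 η t x * dx1 (dx1 u) t x
          + η t x * dx1 (dx1 (dx1 u)) t x) := by
  intro t x
  have hη : SmU η := hη
  have hu : SmU u := hu
  have e0 : dt1 η = fun t x => -dx1 u t x - ε * (dx1 η t x * u t x + η t x * dx1 u t x) := by
    funext t x
    have h1 : dx1 (fun t x => η t x * u t x) t x = dx1 η t x * u t x + η t x * dx1 u t x :=
      ((hη.hx t x).mul (hu.hx t x)).deriv
    have := heq t x
    rw [h1] at this
    linarith
  have e1 : dx1 (dt1 η) = fun t x => -dx1 (dx1 u) t x - ε * (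
      (dx1 (dx1 η) t x * u t x + dx1 η t x * dx1 u t x)
        + (dx1 η t x * dx1 u t x + η t x * dx1 (dx1 u) t x)) := by
    rw [e0]
    funext t x
    exact ((hu.dx.hx t x).neg.sub ((((hη.dx.hx t x).mul (hu.hx t x)).add
      ((hη.hx t x).mul (hu.dx.hx t x))).const_mul ε)).deriv
  have e2 : dx1 (dx1 (dt1 η)) = fun t x => -dx1 (dx1 (dx1 u)) t x - ε * (
      ((dx1 (dx1 (dx1 η)) t x * u t x + dx1 (dx1 η) t x * dx1 u t x)
        + (dx1 (dx1 η) t x * dx1 u t x + dx1 η t x * dx1 (dx1 u) t x))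
      + ((dx1 (dx1 η) t x * dx1 u t x + dx1 η t x * dx1 (dx1 u) t x)
        + (dx1 η t x * dx1 (dx1 u) t x + η t x * dx1 (dx1 (dx1 u)) t x))) := by
    rw [e1]
    funext t x
    exact ((hu.dx.dx.hx t x).neg.sub (((((hη.dx.dx.hx t x).mul (hu.hx t x)).add
      ((hη.dx.hx t x).mul (hu.dx.hx t x))).add (((hη.dx.hx t x).mul (hu.dx.hx t x)).add
      ((hη.hx t x).mul (hu.dx.dx.hx t x)))).const_mul ε)).deriv
  have a1 : dt1 (fun t x => η t x - ε * dx1 (dx1 η) t x) t x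
      = dt1 η t x - ε * dt1 (dx1 (dx1 η)) t x :=
    ((hη.ht t x).sub ((hη.dx.dx.ht t x).const_mul ε)).deriv
  have a2 : dx1 (fun t x => (η t x - ε * dx1 (dx1 η) t x) * u t x) t x
      = (dx1 η t x - ε * dx1 (dx1 (dx1 η)) t x) * u t x
        + (η t x - ε * dx1 (dx1 η) t x) * dx1 u t x :=
    (((hη.hx t x).sub ((hη.dx.dx.hx t x).const_mul ε)).mul (hu.hx t x)).deriv
  rw [a1, a2, hη.dx.comm, hη.comm, e2, e0]
  ring
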